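/- Let β > 0, c ∈ (e^{-2/β}, 1), b = (1/2)βc(-ln c), and K = 8b/((c - b)c²). Then the function θ(r) = -2 ln(c - b + b r²) satisfies the non-local equation θ''(r) + θ'(r)/r + K e^{θ(r)} / (4 (∫₀¹ e^{θ(s)} s ds)²) = 0 for all r ∈ (0,1), together with the Robin boundary condition θ'(1) = -β θ(1). -/

import Mathlib

open Real Set

/-!
In the plane, `-2 log (a + b |x|²)` solves Liouville's equation `Δθ + 8 a b e^θ = 0`. Since
`e^θ = (a + b r²)⁻²`, the integral of `e^θ s` over `[0, 1]` is `1 / (2 a (a + b))`, so the constant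
`K = 8 b / (a (a + b)²)` is exactly the one for which the non-local coefficient
`K / (4 (∫ e^θ s)²)` equals `8 a b`. The boundary condition is independent of this: the slope of the
profile at `r = 1` is `-4 b / (a + b)`, which ties `b` to `β` and `c = a + b`.
-/

/-- The radial solution of Liouville's equation in the plane. The profile `θ_{b,c}` of the paper is
`liouvilleProfile (c - b) b`. -/
noncomputable def liouvilleProfile (a b r : ℝ) : ℝ :=
  -2 * log (a + b * r ^ 2)

section LiouvilleProfile

variable {a b r : ℝ}

theorem hasDerivAt_add_mul_sq (a b r : ℝ) :
    HasDerivAt (fun r ↦ a + b * r ^ 2) (2 * b * r) r := by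
  refine (((hasDerivAt_pow 2 r).const_mul b).const_add a).congr_deriv ?_
  push_cast
  ring

theorem add_mul_sq_pos (ha : 0 < a) (hab : 0 < a + b) (hr : r ∈ Icc (0 : ℝ) 1) :
    0 < a + b * r ^ 2 := by
  have hr_sq : r ^ 2 ≤ 1 := pow_le_one₀ hr.1 hr.2
  calc
    0 < (1 - r ^ 2) * a + r ^ 2 * (a + b) :=
      convex_Ioi (0 : ℝ) ha hab (sub_nonneg.2 hr_sq) (sq_nonneg r) (sub_add_cancel 1 _)
    _ = a + b * r ^ 2 := by ring

theorem exp_liouvilleProfile (h : a + b * r ^ 2 ≠ 0) :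
    exp (liouvilleProfile a b r) = 1 / (a + b * r ^ 2) ^ 2 := by
  rw [liouvilleProfile, neg_mul, exp_neg, ← Nat.cast_two, ← log_pow,
    exp_log (by positivity), one_div]

theorem deriv_liouvilleProfile (h : a + b * r ^ 2 ≠ 0) :
    deriv (liouvilleProfile a b) r = -4 * b * r / (a + b * r ^ 2) := by
  refine (((hasDerivAt_add_mul_sq a b r).log h).const_mul (-2)).deriv.trans ?_
  ring

theorem deriv_deriv_liouvilleProfile (h : a + b * r ^ 2 ≠ 0) :
    deriv (deriv (liouvilleProfile a b)) r = -4 * b * (a - b * r ^ 2) / (a + b * r ^ 2) ^ 2 := by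
  have hderiv : deriv (liouvilleProfile a b) =ᶠ[nhds r] fun s ↦ -4 * b * s / (a + b * s ^ 2) :=
    ((hasDerivAt_add_mul_sq a b r).continuousAt.eventually_ne h).mono
      fun _ ↦ deriv_liouvilleProfile
  have hquot := ((hasDerivAt_id' r).const_mul (-4 * b)).div (hasDerivAt_add_mul_sq a b r) h
  rw [hderiv.deriv_eq]
  refine hquot.deriv.trans ?_
  ring

theorem liouvilleProfile_liouville_equation (hr : r ≠ 0) (h : a + b * r ^ 2 ≠ 0) :
    deriv (deriv (liouvilleProfile a b)) r + deriv (liouvilleProfile a b) r / r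
      + 8 * a * b * exp (liouvilleProfile a b r) = 0 := by
  rw [deriv_deriv_liouvilleProfile h, deriv_liouvilleProfile h, exp_liouvilleProfile h]
  field_simp
  ring

theorem hasDerivAt_sq_div_add_mul_sq (ha : a ≠ 0) (h : a + b * r ^ 2 ≠ 0) :
    HasDerivAt (fun s ↦ s ^ 2 / (2 * a * (a + b * s ^ 2)))
      (1 / (a + b * r ^ 2) ^ 2 * r) r := by
  refine ((hasDerivAt_pow 2 r).div ((hasDerivAt_add_mul_sq a b r).const_mul (2 * a))
    (by positivity)).congr_deriv ?_
  push_cast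
  field_simp
  ring

theorem integral_exp_liouvilleProfile_mul_self {R : ℝ}
    (h : ∀ s ∈ uIcc 0 R, a + b * s ^ 2 ≠ 0) :
    ∫ s in (0 : ℝ)..R, exp (liouvilleProfile a b s) * s = R ^ 2 / (2 * a * (a + b * R ^ 2)) := by
  have ha : a ≠ 0 := by simpa using h 0 left_mem_uIcc
  have hcont : ContinuousOn (fun s ↦ 1 / (a + b * s ^ 2) ^ 2 * s) (uIcc 0 R) :=
    (continuousOn_const.div (by fun_prop) fun s hs ↦ pow_ne_zero 2 (h s hs)).mul continuousOn_id
  calc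
    ∫ s in (0 : ℝ)..R, exp (liouvilleProfile a b s) * s
      = ∫ s in (0 : ℝ)..R, 1 / (a + b * s ^ 2) ^ 2 * s :=
        intervalIntegral.integral_congr fun s hs ↦ by
          simp only [exp_liouvilleProfile (h s hs)]
    _ = R ^ 2 / (2 * a * (a + b * R ^ 2)) - 0 ^ 2 / (2 * a * (a + b * 0 ^ 2)) :=
        intervalIntegral.integral_eq_sub_of_hasDerivAt
          (fun s hs ↦ hasDerivAt_sq_div_add_mul_sq ha (h s hs)) hcont.intervalIntegrable
    _ = R ^ 2 / (2 * a * (a + b * R ^ 2)) := by simp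

theorem liouvilleProfile_nonlocal_equation (ha : 0 < a) (hab : 0 < a + b)
    (hr : r ∈ Ioc (0 : ℝ) 1) :
    deriv (deriv (liouvilleProfile a b)) r + deriv (liouvilleProfile a b) r / r
      + 8 * b / (a * (a + b) ^ 2) * exp (liouvilleProfile a b r)
        / (4 * (∫ s in (0 : ℝ)..1, exp (liouvilleProfile a b s) * s) ^ 2) = 0 := by
  have hne : ∀ s ∈ Icc (0 : ℝ) 1, a + b * s ^ 2 ≠ 0 := fun s hs ↦ (add_mul_sq_pos ha hab hs).ne'
  have hint : ∫ s in (0 : ℝ)..1, exp (liouvilleProfile a b s) * s = 1 / (2 * a * (a + b)) := by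
    simpa only [one_pow, mul_one] using
      integral_exp_liouvilleProfile_mul_self (R := 1) (by rwa [uIcc_of_le zero_le_one])
  have hcoeff : 8 * b / (a * (a + b) ^ 2) * exp (liouvilleProfile a b r)
      / (4 * (1 / (2 * a * (a + b))) ^ 2) = 8 * a * b * exp (liouvilleProfile a b r) := by
    field_simp
    ring
  rw [hint, hcoeff]
  exact liouvilleProfile_liouville_equation hr.1.ne' (hne r (Ioc_subset_Icc_self hr))

theorem liouvilleProfile_robin_iff {β : ℝ} (hab : a + b ≠ 0) :
    deriv (liouvilleProfile a b) 1 = -β * liouvilleProfile a b 1 ↔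
      b = β * (a + b) * (-log (a + b)) / 2 := by
  rw [deriv_liouvilleProfile (by simpa using hab), liouvilleProfile, one_pow, mul_one, mul_one,
    div_eq_iff hab]
  constructor <;> intro h <;> linarith

end LiouvilleProfile

theorem mul_neg_log_div_two_lt_self {β c : ℝ} (hβ : 0 < β) (hc : exp (-2 / β) < c) :
    β * c * (-log c) / 2 < c := by
  have hc_pos : 0 < c := (exp_pos _).trans hc
  have hlog : -2 < log c * β := (div_lt_iff₀ hβ).1 ((lt_log_iff_exp_lt hc_pos).2 hc)
  nlinarith

theorem radial_steady_state_current_general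
    (β c b K : ℝ) (hc : 0 < c) (hbc : b < c)
    (hb : b = β * c * (-Real.log c) / 2)
    (hK : K = 8 * b / ((c - b) * c ^ 2))
    (θ : ℝ → ℝ) (hθ : ∀ r : ℝ, θ r = -2 * Real.log (c - b + b * r ^ 2)) :
    (∀ r ∈ Set.Ioc (0 : ℝ) 1,
      deriv (deriv θ) r + deriv θ r / r
        + K * Real.exp (θ r) / (4 * (∫ s in (0:ℝ)..1, Real.exp (θ s) * s) ^ 2) = 0) ∧
    deriv θ 1 = -β * θ 1 := by
  obtain rfl : θ = liouvilleProfile (c - b) b := funext hθ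
  have hsum : c - b + b = c := sub_add_cancel c b
  constructor
  · intro r hr
    have h := liouvilleProfile_nonlocal_equation (sub_pos.2 hbc) (hsum.symm ▸ hc) hr
    rwa [hsum, ← hK] at h
  · rw [liouvilleProfile_robin_iff (hsum.symm ▸ hc.ne'), hsum]
    exact hb

/-- For β > 0, c ∈ (e^{-2/β}, 1), b = (1/2)βc(-ln c) and
K = 8b/((c-b)c²), the function θ(r) = -2 ln(c - b + b r²) satisfies the non-local
equation θ'' + θ'/r + K e^θ / (4 (∫₀¹ e^θ s ds)²) = 0 on (0,1), with the Robin
boundary condition θ'(1) = -β θ(1). -/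
theorem radial_steady_state_current
    (β c b K : ℝ) (hβ : 0 < β)
    (hc : c ∈ Set.Ioo (Real.exp (-2 / β)) 1)
    (hb : b = β * c * (-Real.log c) / 2)
    (hK : K = 8 * b / ((c - b) * c ^ 2))
    (θ : ℝ → ℝ) (hθ : ∀ r : ℝ, θ r = -2 * Real.log (c - b + b * r ^ 2)) :
    (∀ r ∈ Set.Ioo (0 : ℝ) 1,
      deriv (deriv θ) r + deriv θ r / r
        + K * Real.exp (θ r) / (4 * (∫ s in (0:ℝ)..1, Real.exp (θ s) * s) ^ 2) = 0) ∧
    deriv θ 1 = -β * θ 1 := by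
  have hbc : b < c := hb ▸ mul_neg_log_div_two_lt_self hβ hc.1
  have h := radial_steady_state_current_general β c b K ((exp_pos _).trans hc.1) hbc hb hK θ hθ
  exact ⟨fun r hr ↦ h.1 r (Ioo_subset_Ioc_self hr), h.2⟩
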